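/- (Weighted-average guarantee for Mirror Prox, general stepsizes.) Let τ_t > 0 for t = 1, …, T. Starting from z¹ ∈ 𝒵, for each t = 1, …, T let z̃^t be the minimizer over w ∈ 𝒵 of ⟨τ_t F(z^t), w⟩ + D(w, z^t), and let z^{t+1} be the minimizer over w ∈ 𝒵 of ⟨τ_t F(z̃^t), w⟩ + D(w, z^t). Define δ_t = τ_t⟨F(z̃^t), z̃^t − z^{t+1}⟩ − D(z^{t+1}, z^t). Let w_1, …, w_T be positive and nondecreasing, S_T = Σ_{t=1}^T w_t τ_t, and z̄^T = (x̄^T, ȳ^T) = (1/S_T) Σ_{t=1}^T w_t τ_t z̃^t. Then for every T ≥ 1 and every (x, y) ∈ 𝒳 × 𝒴: φ(x̄^T, y) − φ(x, ȳ^T) ≤ (w_T Ω + Σ_{t=1}^T w_t δ_t)/S_T. -/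

import Mathlib

/-!
The optimality condition of the second prox step, combined with the three-point identity for
Bregman divergences, gives for every comparison point `p ∈ 𝒵`
`τ_t ⟨F(z̃^t), z̃^t - p⟩ ≤ δ_t + D(p, z^t) - D(p, z^{t+1})`.
With weights `w_t` the divergences no longer telescope, but since the weights are nondecreasing and
the divergences are at most `Ω`, Abel summation leaves only `w_T Ω`. Convexity-concavity bounds the
saddle gap of `z̃^t` by `⟨F(z̃^t), z̃^t - p⟩`, and Jensen's inequality passes to the averages.
-/

open Finset

lemma sum_mul_sub_succ_le {w d : ℕ → ℝ} {C : ℝ} (hw₁ : 0 ≤ w 1)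
    (hw : ∀ t, 1 ≤ t → w t ≤ w (t + 1)) (hd : ∀ t, 1 ≤ t → d t ≤ C) {T : ℕ} (hT : 1 ≤ T) :
    ∑ t ∈ Icc 1 T, w t * (d t - d (t + 1)) ≤ w T * (C - d (T + 1)) := by
  induction T, hT using Nat.le_induction with
  | base =>
    rw [Icc_self, sum_singleton]
    exact mul_le_mul_of_nonneg_left (sub_le_sub_right (hd 1 le_rfl) _) hw₁
  | succ T hT ih =>
    rw [sum_Icc_succ_top (by lia)]
    have hincr : 0 ≤ (w (T + 1) - w T) * (C - d (T + 1)) :=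
      mul_nonneg (sub_nonneg.2 (hw T hT)) (sub_nonneg.2 (hd (T + 1) (by lia)))
    linarith

section Convex

variable {E : Type*} [NormedAddCommGroup E] [NormedSpace ℝ E] {S : Set E} {f : E → ℝ}
  {f' : E →L[ℝ] ℝ} {a b : E}

lemma hasFDerivWithinAt_apply_sub_le_of_convexOn (hf : ConvexOn ℝ S f)
    (hf' : HasFDerivWithinAt f f' S a) (ha : a ∈ S) (hb : b ∈ S) : f' (b - a) ≤ f b - f a := by
  let ℓ : ℝ →ᵃ[ℝ] E := AffineMap.lineMap a b
  have hℓ0 : ℓ 0 = a := AffineMap.lineMap_apply_zero a b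
  have hℓ1 : ℓ 1 = b := AffineMap.lineMap_apply_one a b
  have hderiv : HasDerivWithinAt (f ∘ ℓ) (f' (b - a)) (ℓ ⁻¹' S) 0 :=
    HasFDerivWithinAt.comp_hasDerivWithinAt 0 (hℓ0.symm ▸ hf')
      AffineMap.hasDerivWithinAt_lineMap (Set.mapsTo_preimage ℓ S)
  have hslope := (hf.comp_affineMap ℓ).le_slope_of_hasDerivWithinAt
    (by simpa [hℓ0] using ha) (by simpa [hℓ1] using hb) one_pos hderiv
  simpa [slope_def_field, hℓ0, hℓ1] using hslope

lemma hasFDerivWithinAt_apply_sub_nonneg_of_isMinOn (hS : Convex ℝ S) (hmin : IsMinOn f S a)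
    (hf' : HasFDerivWithinAt f f' S a) (ha : a ∈ S) (hb : b ∈ S) : 0 ≤ f' (b - a) :=
  hmin.localize.hasFDerivWithinAt_nonneg hf'
    (sub_mem_posTangentConeAt_of_segment_subset (hS.segment_subset ha hb))

lemma strongConvexOn_univ_of_forall_le {m : ℝ}
    (h : ∀ (v v' : E) (l : ℝ), 0 ≤ l → l ≤ 1 →
      f (l • v + (1 - l) • v') ≤
        l * f v + (1 - l) * f v' - m / 2 * l * (1 - l) * ‖v - v'‖ ^ 2) :
    StrongConvexOn Set.univ m f := by
  refine ⟨convex_univ, fun v _ v' _ l r hl hr hlr => ?_⟩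
  obtain rfl : r = 1 - l := by linarith
  have := h v v' l hl (by linarith)
  simp only [smul_eq_mul]
  linarith

end Convex

section Bregman

variable {E : Type*} [NormedAddCommGroup E] [NormedSpace ℝ E]

/-- The Bregman divergence `D(p, z)` of `ψ`, the distance term of the prox steps. The derivative
`ψ'` is a separate argument, so that it may be a derivative within a set. -/
def bregmanDiv (ψ : E → ℝ) (ψ' : E → E →L[ℝ] ℝ) (p z : E) : ℝ :=
  ψ p - ψ z - ψ' z (p - z)

variable {S : Set E} {ψ : E → ℝ} {ψ' : E → E →L[ℝ] ℝ}

lemma bregmanDiv_nonneg (hψ : ConvexOn ℝ S ψ) {p z : E} (hψ' : HasFDerivWithinAt ψ (ψ' z) S z)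
    (hp : p ∈ S) (hz : z ∈ S) : 0 ≤ bregmanDiv ψ ψ' p z :=
  sub_nonneg.2 (hasFDerivWithinAt_apply_sub_le_of_convexOn hψ hψ' hz hp)

lemma bregmanDiv_three_point (ψ : E → ℝ) (ψ' : E → E →L[ℝ] ℝ) (p u z : E) :
    (ψ' u - ψ' z) (p - u) = bregmanDiv ψ ψ' p z - bregmanDiv ψ ψ' p u - bregmanDiv ψ ψ' u z := by
  simp only [bregmanDiv, sub_apply, map_sub]
  ring

lemma hasFDerivWithinAt_bregmanDiv {u : E} (hψ' : HasFDerivWithinAt ψ (ψ' u) S u) (z : E) :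
    HasFDerivWithinAt (fun p => bregmanDiv ψ ψ' p z) (ψ' u - ψ' z) S u :=
  (hψ'.sub_const (ψ z)).sub
    ((ψ' z).hasFDerivWithinAt.comp u ((hasFDerivWithinAt_id u S).sub_const z) (Set.mapsTo_univ _ _))

lemma apply_sub_le_of_isMinOn_add_bregmanDiv (hS : Convex ℝ S) {g : E →L[ℝ] ℝ} {p u z : E}
    (hψ' : HasFDerivWithinAt ψ (ψ' u) S u)
    (hmin : IsMinOn (fun q => g q + bregmanDiv ψ ψ' q z) S u) (hu : u ∈ S) (hp : p ∈ S) :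
    g (u - p) ≤ bregmanDiv ψ ψ' p z - bregmanDiv ψ ψ' p u - bregmanDiv ψ ψ' u z := by
  have hoptimal : 0 ≤ (g + (ψ' u - ψ' z)) (p - u) :=
    hasFDerivWithinAt_apply_sub_nonneg_of_isMinOn hS hmin
      (g.hasFDerivWithinAt.add (hasFDerivWithinAt_bregmanDiv hψ' z)) hu hp
  rw [add_apply, bregmanDiv_three_point, ← neg_sub u p, map_neg] at hoptimal
  linarith

lemma weighted_regret_le (hψ : ConvexOn ℝ S ψ) (hψ' : ∀ z ∈ S, HasFDerivWithinAt ψ (ψ' z) S z)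
    {g : ℕ → E →L[ℝ] ℝ} {v z : ℕ → E} (hz : ∀ t, 1 ≤ t → z t ∈ S)
    (hmin : ∀ t, 1 ≤ t → IsMinOn (fun q => g t q + bregmanDiv ψ ψ' q (z t)) S (z (t + 1)))
    {w : ℕ → ℝ} (hwpos : ∀ t, 1 ≤ t → 0 ≤ w t) (hwmono : ∀ t, 1 ≤ t → w t ≤ w (t + 1))
    {p : E} (hp : p ∈ S) {Ω : ℝ} (hΩ : ∀ t, 1 ≤ t → bregmanDiv ψ ψ' p (z t) ≤ Ω)
    {T : ℕ} (hT : 1 ≤ T) :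
    ∑ t ∈ Icc 1 T, w t * g t (v t - p) ≤
      w T * Ω + ∑ t ∈ Icc 1 T,
        w t * (g t (v t - z (t + 1)) - bregmanDiv ψ ψ' (z (t + 1)) (z t)) := by
  let d : ℕ → ℝ := fun t => bregmanDiv ψ ψ' p (z t)
  let δ : ℕ → ℝ := fun t => g t (v t - z (t + 1)) - bregmanDiv ψ ψ' (z (t + 1)) (z t)
  have hstep : ∀ t, 1 ≤ t → g t (v t - p) ≤ d t - d (t + 1) + δ t := fun t ht => by
    have hz' := hz (t + 1) (by lia)
    have hprox := apply_sub_le_of_isMinOn_add_bregmanDiv hψ.1 (hψ' _ hz') (hmin t ht) hz' hp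
    rw [← sub_add_sub_cancel (v t) (z (t + 1)) p, map_add]
    linarith
  have hlast : 0 ≤ w T * d (T + 1) :=
    have hz' := hz (T + 1) (by lia)
    mul_nonneg (hwpos T hT) (bregmanDiv_nonneg hψ (hψ' _ hz') hp hz')
  calc ∑ t ∈ Icc 1 T, w t * g t (v t - p)
      ≤ ∑ t ∈ Icc 1 T, w t * (d t - d (t + 1) + δ t) := sum_le_sum fun t ht =>
        have ht := (mem_Icc.1 ht).1
        mul_le_mul_of_nonneg_left (hstep t ht) (hwpos t ht)
    _ = ∑ t ∈ Icc 1 T, w t * (d t - d (t + 1)) + ∑ t ∈ Icc 1 T, w t * δ t := by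
        simp only [mul_add, sum_add_distrib]
    _ ≤ w T * (Ω - d (T + 1)) + ∑ t ∈ Icc 1 T, w t * δ t := by
        gcongr
        exact sum_mul_sub_succ_le (hwpos 1 le_rfl) hwmono hΩ hT
    _ ≤ w T * Ω + ∑ t ∈ Icc 1 T, w t * δ t := by linarith

end Bregman

/-- The gap of a candidate saddle point `v` against a comparison point `p`; its supremum over `p` is
the duality gap of `v`. -/
def saddleGap {X Y : Type*} (φ : X → Y → ℝ) (v p : X × Y) : ℝ :=
  φ v.1 p.2 - φ p.1 v.2

section SaddleGap

variable {X Y : Type*} {SX : Set X} {SY : Set Y} {φ : X → Y → ℝ}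

lemma saddleGap_le_of_hasFDerivWithinAt [NormedAddCommGroup X] [NormedSpace ℝ X]
    [NormedAddCommGroup Y] [NormedSpace ℝ Y] {v p : X × Y}
    (hconv : ConvexOn ℝ SX fun x => φ x v.2) (hconc : ConcaveOn ℝ SY fun y => φ v.1 y)
    {gx : X →L[ℝ] ℝ} {gy : Y →L[ℝ] ℝ} (hgx : HasFDerivWithinAt (fun x => φ x v.2) gx SX v.1)
    (hgy : HasFDerivWithinAt (fun y => φ v.1 y) gy SY v.2)
    (hv : v ∈ SX ×ˢ SY) (hp : p ∈ SX ×ˢ SY) :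
    saddleGap φ v p ≤ gx (v - p).1 - gy (v - p).2 := by
  have hx := hasFDerivWithinAt_apply_sub_le_of_convexOn hconv hgx hv.1 hp.1
  have hy := hasFDerivWithinAt_apply_sub_le_of_convexOn hconc.neg hgy.neg hv.2 hp.2
  simp only [saddleGap, Prod.fst_sub, Prod.snd_sub, neg_apply, Pi.neg_apply,
    map_sub] at hx hy ⊢
  linarith

lemma saddleGap_centerMass_le [AddCommGroup X] [Module ℝ X] [AddCommGroup Y] [Module ℝ Y]
    {ι : Type*} {s : Finset ι} {c : ι → ℝ} {v : ι → X × Y} {p : X × Y}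
    (hconv : ConvexOn ℝ SX fun x => φ x p.2) (hconc : ConcaveOn ℝ SY fun y => φ p.1 y)
    (hc : ∀ i ∈ s, 0 ≤ c i) (hcsum : 0 < ∑ i ∈ s, c i) (hv : ∀ i ∈ s, v i ∈ SX ×ˢ SY) :
    saddleGap φ (s.centerMass c v) p ≤ s.centerMass c fun i => saddleGap φ (v i) p := by
  have hx := hconv.map_centerMass_le hc hcsum fun i hi => (hv i hi).1
  have hy := hconc.le_map_centerMass hc hcsum fun i hi => (hv i hi).2
  simpa only [saddleGap, centerMass, Function.comp_def, Prod.smul_fst, Prod.smul_snd,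
    Prod.fst_sum, Prod.snd_sum, smul_sub, sum_sub_distrib] using sub_le_sub hx hy

lemma saddleGap_centerMass_le_of_hasFDerivWithinAt [NormedAddCommGroup X] [NormedSpace ℝ X]
    [NormedAddCommGroup Y] [NormedSpace ℝ Y]
    (hconv : ∀ y ∈ SY, ConvexOn ℝ SX fun x => φ x y)
    (hconc : ∀ x ∈ SX, ConcaveOn ℝ SY fun y => φ x y)
    {gx : X × Y → X →L[ℝ] ℝ} {gy : X × Y → Y →L[ℝ] ℝ}
    (hgx : ∀ z ∈ SX ×ˢ SY, HasFDerivWithinAt (fun x => φ x z.2) (gx z) SX z.1)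
    (hgy : ∀ z ∈ SX ×ˢ SY, HasFDerivWithinAt (fun y => φ z.1 y) (gy z) SY z.2)
    {ι : Type*} {s : Finset ι} {c : ι → ℝ} {v : ι → X × Y} {p : X × Y}
    (hc : ∀ i ∈ s, 0 ≤ c i) (hcsum : 0 < ∑ i ∈ s, c i) (hv : ∀ i ∈ s, v i ∈ SX ×ˢ SY)
    (hp : p ∈ SX ×ˢ SY) :
    saddleGap φ (s.centerMass c v) p ≤
      (∑ i ∈ s, c i * (gx (v i) (v i - p).1 - gy (v i) (v i - p).2)) / ∑ i ∈ s, c i := by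
  have hgap : ∀ i ∈ s, saddleGap φ (v i) p ≤ gx (v i) (v i - p).1 - gy (v i) (v i - p).2 :=
    fun i hi => saddleGap_le_of_hasFDerivWithinAt (hconv _ (hv i hi).2) (hconc _ (hv i hi).1)
      (hgx _ (hv i hi)) (hgy _ (hv i hi)) (hv i hi) hp
  refine (saddleGap_centerMass_le (hconv _ hp.2) (hconc _ hp.1) hc hcsum hv).trans ?_
  rw [centerMass, smul_eq_mul, inv_mul_eq_div]
  gcongr with i hi
  exact mul_le_mul_of_nonneg_left (hgap i hi) (hc i hi)

end SaddleGap

theorem stmt_7_general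
    {X Y : Type*} [NormedAddCommGroup X] [NormedSpace ℝ X]
    [NormedAddCommGroup Y] [NormedSpace ℝ Y]
    {SX : Set X} {SY : Set Y} {φ : X → Y → ℝ}
    (hφconv : ∀ y ∈ SY, ConvexOn ℝ SX (fun x => φ x y))
    (hφconc : ∀ x ∈ SX, ConcaveOn ℝ SY (fun y => φ x y))
    {φx' : X × Y → X →L[ℝ] ℝ} {φy' : X × Y → Y →L[ℝ] ℝ}
    (hφx' : ∀ z ∈ SX ×ˢ SY, HasFDerivWithinAt (fun x => φ x z.2) (φx' z) SX z.1)
    (hφy' : ∀ z ∈ SX ×ˢ SY, HasFDerivWithinAt (fun y => φ z.1 y) (φy' z) SY z.2)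
    {F : X × Y → (X × Y) →L[ℝ] ℝ} (hF : ∀ z w, F z w = φx' z w.1 - φy' z w.2)
    {ψ : X × Y → ℝ} {ψ' : X × Y → (X × Y) →L[ℝ] ℝ} (hψ : ConvexOn ℝ (SX ×ˢ SY) ψ)
    (hψ' : ∀ z ∈ SX ×ˢ SY, HasFDerivWithinAt ψ (ψ' z) (SX ×ˢ SY) z)
    {D : X × Y → X × Y → ℝ} (hD : ∀ p z, D p z = ψ p - ψ z - ψ' z (p - z))
    {Ω : ℝ} (hΩ : ∀ z ∈ SX ×ˢ SY, ∀ z' ∈ SX ×ˢ SY, D z z' ≤ Ω)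
    {τs : ℕ → ℝ} (hτspos : ∀ t, 1 ≤ t → 0 < τs t)
    {z ztil : ℕ → X × Y} (hz1 : z 1 ∈ SX ×ˢ SY) (hztil : ∀ t, 1 ≤ t → ztil t ∈ SX ×ˢ SY)
    (hznext : ∀ t, 1 ≤ t → z (t + 1) ∈ SX ×ˢ SY ∧ ∀ p ∈ SX ×ˢ SY,
      τs t * F (ztil t) (z (t + 1)) + D (z (t + 1)) (z t) ≤ τs t * F (ztil t) p + D p (z t))
    {δ : ℕ → ℝ} (hδ : ∀ t, 1 ≤ t →
      δ t = τs t * F (ztil t) (ztil t - z (t + 1)) - D (z (t + 1)) (z t))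
    {w : ℕ → ℝ} (hwpos : ∀ t, 1 ≤ t → 0 < w t) (hwmono : ∀ t, 1 ≤ t → w t ≤ w (t + 1))
    {T : ℕ} (hT : 1 ≤ T) {x : X} (hx : x ∈ SX) {y : Y} (hy : y ∈ SY) :
    φ ((1 / ∑ t ∈ Icc 1 T, w t * τs t) • ∑ t ∈ Icc 1 T, (w t * τs t) • ztil t).1 y -
        φ x ((1 / ∑ t ∈ Icc 1 T, w t * τs t) • ∑ t ∈ Icc 1 T, (w t * τs t) • ztil t).2 ≤
      (w T * Ω + ∑ t ∈ Icc 1 T, w t * δ t) / ∑ t ∈ Icc 1 T, w t * τs t := by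
  obtain rfl : D = bregmanDiv ψ ψ' := funext₂ hD
  have hp : (x, y) ∈ SX ×ˢ SY := ⟨hx, hy⟩
  have hz : ∀ t, 1 ≤ t → z t ∈ SX ×ˢ SY := fun t ht =>
    Nat.le_induction hz1 (fun t ht _ => (hznext t ht).1) t ht
  have hc : ∀ t ∈ Icc 1 T, 0 < w t * τs t := fun t ht =>
    mul_pos (hwpos t (mem_Icc.1 ht).1) (hτspos t (mem_Icc.1 ht).1)
  have hcsum : 0 < ∑ t ∈ Icc 1 T, w t * τs t := sum_pos hc (nonempty_Icc.2 hT)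
  have hgap := saddleGap_centerMass_le_of_hasFDerivWithinAt hφconv hφconc hφx' hφy'
    (fun t ht => (hc t ht).le) hcsum (fun t ht => hztil t (mem_Icc.1 ht).1) hp
  have hregret := weighted_regret_le (g := fun t => τs t • F (ztil t)) (v := ztil) hψ hψ' hz
    (fun t ht => (hznext t ht).2) (fun t ht => (hwpos t ht).le) hwmono hp
    (fun t ht => hΩ _ hp _ (hz t ht)) hT
  have hδsum : ∑ t ∈ Icc 1 T, w t * δ t = ∑ t ∈ Icc 1 T, w t *
      (τs t * F (ztil t) (ztil t - z (t + 1)) - bregmanDiv ψ ψ' (z (t + 1)) (z t)) :=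
    sum_congr rfl fun t ht => by rw [hδ t (mem_Icc.1 ht).1]
  simp only [← hF, mul_assoc] at hgap
  rw [one_div, hδsum]
  exact hgap.trans (div_le_div_of_nonneg_right hregret hcsum.le)

/-- Weighted-average guarantee for Mirror Prox with general stepsizes:
`φ(x̄^T, y) − φ(x, ȳ^T) ≤ (w_T Ω + Σ_t w_t δ_t)/S_T`. -/
theorem stmt_7
    {X Y : Type*} [NormedAddCommGroup X] [NormedSpace ℝ X] [FiniteDimensional ℝ X]
    [NormedAddCommGroup Y] [NormedSpace ℝ Y] [FiniteDimensional ℝ Y]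
    -- nonempty closed convex sets 𝒳 ⊆ X, 𝒴 ⊆ Y; 𝒵 = 𝒳 × 𝒴
    (SX : Set X) (SY : Set Y)
    (hSXne : SX.Nonempty) (hSXcl : IsClosed SX) (hSXconv : Convex ℝ SX)
    (hSYne : SY.Nonempty) (hSYcl : IsClosed SY) (hSYconv : Convex ℝ SY)
    -- the convex-concave cost φ and its gradient vector field F
    (φ : X → Y → ℝ)
    (hφconv : ∀ y ∈ SY, ConvexOn ℝ SX (fun x => φ x y))
    (hφconc : ∀ x ∈ SX, ConcaveOn ℝ SY (fun y => φ x y))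
    (φx' : X × Y → X →L[ℝ] ℝ) (φy' : X × Y → Y →L[ℝ] ℝ)
    (hφx' : ∀ z : X × Y, HasFDerivAt (fun x => φ x z.2) (φx' z) z.1)
    (hφy' : ∀ z : X × Y, HasFDerivAt (fun y => φ z.1 y) (φy' z) z.2)
    (F : X × Y → (X × Y) →L[ℝ] ℝ)
    (hF : ∀ z w : X × Y, F z w = φx' z w.1 - φy' z w.2)
    -- distance-generating function on Z = X × Y: differentiable, 1-strongly convex
    (ψ : X × Y → ℝ) (ψ' : X × Y → (X × Y) →L[ℝ] ℝ)
    (hψd : ∀ z, HasFDerivAt ψ (ψ' z) z)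
    (hψsc : ∀ (v v' : X × Y) (l : ℝ), 0 ≤ l → l ≤ 1 →
      ψ (l • v + (1 - l) • v') ≤
        l * ψ v + (1 - l) * ψ v' - 1 / 2 * l * (1 - l) * ‖v - v'‖ ^ 2)
    (D : X × Y → X × Y → ℝ) (hD : ∀ p z, D p z = ψ p - ψ z - ψ' z (p - z))
    (Ω : ℝ) (hΩ : ∀ z ∈ SX ×ˢ SY, ∀ z' ∈ SX ×ˢ SY, D z z' ≤ Ω)
    -- stepsizes
    (τs : ℕ → ℝ) (hτspos : ∀ t : ℕ, 1 ≤ t → 0 < τs t)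
    -- the Mirror Prox iterates
    (z : ℕ → X × Y) (ztil : ℕ → X × Y)
    (hz1 : z 1 ∈ SX ×ˢ SY)
    (hztil : ∀ t : ℕ, 1 ≤ t → ztil t ∈ SX ×ˢ SY ∧ ∀ p ∈ SX ×ˢ SY,
      τs t * F (z t) (ztil t) + D (ztil t) (z t) ≤ τs t * F (z t) p + D p (z t))
    (hznext : ∀ t : ℕ, 1 ≤ t → z (t + 1) ∈ SX ×ˢ SY ∧ ∀ p ∈ SX ×ˢ SY,
      τs t * F (ztil t) (z (t + 1)) + D (z (t + 1)) (z t) ≤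
        τs t * F (ztil t) p + D p (z t))
    (δ : ℕ → ℝ)
    (hδ : ∀ t : ℕ, 1 ≤ t →
      δ t = τs t * F (ztil t) (ztil t - z (t + 1)) - D (z (t + 1)) (z t))
    -- positive nondecreasing weights
    (w : ℕ → ℝ) (hwpos : ∀ t : ℕ, 1 ≤ t → 0 < w t)
    (hwmono : ∀ t : ℕ, 1 ≤ t → w t ≤ w (t + 1)) :
    ∀ T : ℕ, 1 ≤ T → ∀ x ∈ SX, ∀ y ∈ SY,
      φ ((1 / ∑ t ∈ Finset.Icc 1 T, w t * τs t) •
            ∑ t ∈ Finset.Icc 1 T, (w t * τs t) • ztil t).1 y -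
          φ x ((1 / ∑ t ∈ Finset.Icc 1 T, w t * τs t) •
            ∑ t ∈ Finset.Icc 1 T, (w t * τs t) • ztil t).2 ≤
        (w T * Ω + ∑ t ∈ Finset.Icc 1 T, w t * δ t) /
          (∑ t ∈ Finset.Icc 1 T, w t * τs t) :=
  fun _ hT _ hx _ hy => stmt_7_general hφconv hφconc
    (fun z _ => (hφx' z).hasFDerivWithinAt) (fun z _ => (hφy' z).hasFDerivWithinAt) hF
    (((strongConvexOn_univ_of_forall_le hψsc).convexOn fun r => by positivity).subset
      (Set.subset_univ _) (hSXconv.prod hSYconv))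
    (fun z _ => (hψd z).hasFDerivWithinAt) hD hΩ hτspos hz1 (fun t ht => (hztil t ht).1)
    hznext hδ hwpos hwmono hT hx hy
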